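/- Let X ~ Binomial(n, π) with n ≥ 1 and π ∈ (0,1), let π̂ = X/n and θ = π(1−π). Then E[π̂⁴] = π⁴ + 6π²θ/n + 4π(1−2π)θ/n² + 3θ²/n² + (1−6θ)θ/n³, and E[π̂⁴] ≤ 28·max{π⁴, π/n³}. Consequently, there exists a universal constant C' > 0 (not depending on n or π) such that E[(π̂(1 − π̂))⁴] ≤ C'·max{θ⁴, θ/n³}. -/

import Mathlib

noncomputable section

/-- `X` has the `Binomial(n, p)` distribution under the measure `μ`. -/
def IsBinomial {Ω : Type*} [MeasurableSpace Ω] (μ : MeasureTheory.Measure Ω) (X : Ω → ℕ)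
    (n : ℕ) (p : ℝ) : Prop :=
  ∀ m : ℕ, (μ {ω | X ω = m}).toReal = (n.choose m : ℝ) * p ^ m * (1 - p) ^ (n - m)

open MeasureTheory ProbabilityTheory

/-!
The factorial moments of `Bin(n, p)` are `n(n-1)⋯(n-j+1) pʲ`, so expanding `Xᵏ` in falling
factorials gives `E[Xᵏ] = ∑ⱼ S(k, j) n(n-1)⋯(n-j+1) pʲ ≤ ∑ⱼ S(k, j) (np)ʲ`. For `k ≥ 1` each
power occurring lies below `max(np, (np)ᵏ)`, which bounds the moment by the `k`-th Bell number
times that maximum (`15` for `k = 4`). For `p ≤ 1/2` the bound on `π̂(1 - π̂)` follows from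
`π̂(1 - π̂) ≤ π̂` and `p ≤ 2θ`; the symmetry `X ↦ n - X` covers the other half.
-/

section Stirling

lemma mul_descFactorial_eq_add (m j : ℕ) :
    m * m.descFactorial j = m.descFactorial (j + 1) + j * m.descFactorial j := by
  rcases le_or_gt j m with hj | hj
  · rw [Nat.descFactorial_succ, ← add_mul, Nat.sub_add_cancel hj]
  · simp [Nat.descFactorial_of_lt hj]

lemma cast_descFactorial_succ {R : Type*} [Ring R] (m j : ℕ) :
    (m.descFactorial (j + 1) : R) = m.descFactorial j * (m - j) := by
  rw [mul_sub, eq_sub_iff_add_eq, ← Nat.cast_mul, ← Nat.cast_mul, ← Nat.cast_add,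
    mul_comm _ j, mul_comm _ m, mul_descFactorial_eq_add]

lemma pow_eq_sum_stirlingSecond_mul_descFactorial (m k : ℕ) :
    m ^ k = ∑ j ∈ Finset.range (k + 1), k.stirlingSecond j * m.descFactorial j := by
  induction k with
  | zero => simp
  | succ k ih =>
    have shift : ∑ j ∈ Finset.range (k + 1),
          (j + 1) * k.stirlingSecond (j + 1) * m.descFactorial (j + 1)
        = ∑ j ∈ Finset.range (k + 1), j * k.stirlingSecond j * m.descFactorial j := by
      have h := Finset.sum_range_succ' (fun j ↦ j * k.stirlingSecond j * m.descFactorial j) (k + 1)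
      rw [Finset.sum_range_succ, Nat.stirlingSecond_eq_zero_of_lt k.lt_succ_self] at h
      simpa using h.symm
    calc m ^ (k + 1)
        = ∑ j ∈ Finset.range (k + 1), k.stirlingSecond j * (m * m.descFactorial j) := by
          rw [pow_succ, ih, Finset.sum_mul]
          exact Finset.sum_congr rfl fun j _ ↦ by ring
      _ = ∑ j ∈ Finset.range (k + 1), (j * k.stirlingSecond j * m.descFactorial j
            + k.stirlingSecond j * m.descFactorial (j + 1)) :=
          Finset.sum_congr rfl fun j _ ↦ by rw [mul_descFactorial_eq_add]; ring
      _ = ∑ j ∈ Finset.range (k + 1),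
            (k + 1).stirlingSecond (j + 1) * m.descFactorial (j + 1) := by
          simp only [Finset.sum_add_distrib, ← shift, Nat.stirlingSecond_succ_succ, add_mul]
      _ = ∑ j ∈ Finset.range (k + 1 + 1), (k + 1).stirlingSecond j * m.descFactorial j := by
          rw [Finset.sum_range_succ' _ (k + 1), Nat.stirlingSecond_succ_zero, zero_mul, add_zero]

/-- The Touchard polynomial `T_k(x) = ∑ⱼ S(k, j) xʲ`, i.e. the `k`-th moment of a Poisson variable
of mean `x`; its value at `1` is the `k`-th Bell number. -/
def touchard (k : ℕ) (x : ℝ) : ℝ :=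
  ∑ j ∈ Finset.range (k + 1), k.stirlingSecond j * x ^ j

lemma touchard_four_one : touchard 4 1 = 15 := by
  norm_num [touchard, Finset.sum_range_succ, Nat.stirlingSecond]

lemma touchard_one_nonneg (k : ℕ) : 0 ≤ touchard k 1 := by
  unfold touchard; positivity

lemma pow_le_max_pow_pow {R : Type*} [Semiring R] [LinearOrder R] [IsOrderedRing R]
    {x : R} (hx : 0 ≤ x) {a j b : ℕ} (haj : a ≤ j) (hjb : j ≤ b) :
    x ^ j ≤ max (x ^ a) (x ^ b) := by
  rcases le_total x 1 with h | h
  · exact le_max_of_le_left (pow_le_pow_of_le_one hx h haj)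
  · exact le_max_of_le_right (pow_le_pow_right₀ h hjb)

lemma touchard_succ_le (k : ℕ) {x : ℝ} (hx : 0 ≤ x) :
    touchard (k + 1) x ≤ touchard (k + 1) 1 * max x (x ^ (k + 1)) := by
  unfold touchard
  rw [Finset.sum_mul]
  refine Finset.sum_le_sum fun j hj ↦ ?_
  rcases j with _ | j
  · simp
  · have hle : x ^ (j + 1) ≤ max (x ^ 1) (x ^ (k + 1)) :=
      pow_le_max_pow_pow hx (by omega) (Finset.mem_range_succ_iff.mp hj)
    simpa using mul_le_mul_of_nonneg_left hle (Nat.cast_nonneg ((k + 1).stirlingSecond (j + 1)))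

end Stirling

section FactorialMoments

lemma choose_add_mul_descFactorial (k l i : ℕ) :
    (k + l).choose (k + i) * (k + i).descFactorial k = (k + l).descFactorial k * l.choose i := by
  have h := Nat.choose_mul (n := k + l) (Nat.le_add_right k i)
  simp only [Nat.add_sub_cancel_left] at h
  rw [Nat.descFactorial_eq_factorial_mul_choose, Nat.descFactorial_eq_factorial_mul_choose]
  linear_combination k.factorial * h

lemma sum_range_choose_mul_descFactorial {R : Type*} [CommSemiring R] (x y : R) (n k : ℕ) :
    ∑ i ∈ Finset.range (n + 1), n.choose i * x ^ i * y ^ (n - i) * i.descFactorial k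
      = n.descFactorial k * x ^ k * (x + y) ^ (n - k) := by
  rcases lt_or_ge n k with hnk | hkn
  · rw [Nat.descFactorial_of_lt hnk, Nat.cast_zero, zero_mul, zero_mul]
    refine Finset.sum_eq_zero fun i hi ↦ ?_
    rw [Nat.descFactorial_of_lt ((Finset.mem_range_succ_iff.mp hi).trans_lt hnk), Nat.cast_zero,
      mul_zero]
  obtain ⟨l, rfl⟩ := Nat.exists_eq_add_of_le hkn
  have hlow : ∑ i ∈ Finset.range k,
      ((k + l).choose i * x ^ i * y ^ (k + l - i) * i.descFactorial k : R) = 0 :=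
    Finset.sum_eq_zero fun i hi ↦ by
      rw [Nat.descFactorial_of_lt (Finset.mem_range.mp hi), Nat.cast_zero, mul_zero]
  rw [add_assoc k l 1, Finset.sum_range_add, hlow, zero_add, Nat.add_sub_cancel_left, add_pow,
    Finset.mul_sum]
  refine Finset.sum_congr rfl fun i _ ↦ ?_
  have hchoose : ((k + l).choose (k + i) * (k + i).descFactorial k : R)
      = (k + l).descFactorial k * l.choose i := by
    simpa only [Nat.cast_mul] using
      congrArg (Nat.cast (R := R)) (choose_add_mul_descFactorial k l i)
  calc ((k + l).choose (k + i) * x ^ (k + i) * y ^ (k + l - (k + i)) * (k + i).descFactorial k : R)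
      = ((k + l).choose (k + i) * (k + i).descFactorial k) * (x ^ (k + i) * y ^ (l - i)) := by
        rw [Nat.add_sub_add_left]; ring
    _ = (k + l).descFactorial k * x ^ k * (x ^ i * y ^ (l - i) * l.choose i) := by
        rw [hchoose]; ring

end FactorialMoments

section Binomial

open unitInterval

lemma integral_descFactorial_binomial (n k : ℕ) (p : I) :
    ∫ x, (x.descFactorial k : ℝ) ∂Bin(n, p) = n.descFactorial k * (p : ℝ) ^ k := by
  rw [integral_binomial, ← Nat.range_succ_eq_Iic]
  simp only [smul_eq_mul, sum_range_choose_mul_descFactorial, add_sub_cancel, one_pow, mul_one]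

lemma integral_pow_binomial (n k : ℕ) (p : I) :
    ∫ x, (x : ℝ) ^ k ∂Bin(n, p)
      = ∑ j ∈ Finset.range (k + 1), k.stirlingSecond j * (n.descFactorial j * (p : ℝ) ^ j) := by
  have hpow (x : ℕ) : (x : ℝ) ^ k
      = ∑ j ∈ Finset.range (k + 1), (k.stirlingSecond j : ℝ) * x.descFactorial j :=
    mod_cast pow_eq_sum_stirlingSecond_mul_descFactorial x k
  simp only [hpow]
  rw [integral_finsetSum _ fun j _ ↦ integrable_binomial _]
  simp only [integral_const_mul, integral_descFactorial_binomial]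

lemma integral_pow_binomial_le_touchard (n k : ℕ) (p : I) :
    ∫ x, (x : ℝ) ^ k ∂Bin(n, p) ≤ touchard k (n * p) := by
  rw [integral_pow_binomial, touchard]
  refine Finset.sum_le_sum fun j _ ↦ mul_le_mul_of_nonneg_left ?_ (Nat.cast_nonneg _)
  rw [mul_pow]
  exact mul_le_mul_of_nonneg_right (mod_cast n.descFactorial_le_pow j) (pow_nonneg p.2.1 j)

lemma integral_div_pow_four_binomial {n : ℕ} (hn : n ≠ 0) (p : I) :
    ∫ x, ((x : ℝ) / n) ^ 4 ∂Bin(n, p)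
      = (p : ℝ) ^ 4 + 6 * (p : ℝ) ^ 2 * (p * (1 - p)) / (n : ℝ)
        + 4 * p * (1 - 2 * p) * (p * (1 - p)) / (n : ℝ) ^ 2
        + 3 * (p * (1 - p)) ^ 2 / (n : ℝ) ^ 2
        + (1 - 6 * (p * (1 - p))) * (p * (1 - p)) / (n : ℝ) ^ 3 := by
  have hmoment : ∫ x, (x : ℝ) ^ 4 ∂Bin(n, p)
      = n * p + 7 * (n * (n - 1)) * (p : ℝ) ^ 2 + 6 * (n * (n - 1) * (n - 2)) * (p : ℝ) ^ 3
        + n * (n - 1) * (n - 2) * (n - 3) * (p : ℝ) ^ 4 := by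
    simp only [integral_pow_binomial, Finset.sum_range_succ, Finset.sum_range_zero,
      cast_descFactorial_succ, Nat.descFactorial_zero, Nat.stirlingSecond]
    push_cast
    ring
  simp only [div_pow, integral_div, hmoment]
  field_simp
  ring

lemma integral_div_pow_binomial_le {n : ℕ} (hn : n ≠ 0) (k : ℕ) (p : I) :
    ∫ x, ((x : ℝ) / n) ^ (k + 1) ∂Bin(n, p)
      ≤ touchard (k + 1) 1 * max ((p : ℝ) ^ (k + 1)) (p / (n : ℝ) ^ k) := by
  have hn₀ : (0 : ℝ) < n := mod_cast hn.pos
  have hscale : max (n * p : ℝ) ((n * p) ^ (k + 1)) / (n : ℝ) ^ (k + 1)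
      = max ((p : ℝ) ^ (k + 1)) (p / (n : ℝ) ^ k) := by
    rw [← max_div_div_right (by positivity), max_comm, mul_pow, pow_succ' (n : ℝ)]
    congr 1 <;> field_simp
  calc ∫ x, ((x : ℝ) / n) ^ (k + 1) ∂Bin(n, p)
      = (∫ x, (x : ℝ) ^ (k + 1) ∂Bin(n, p)) / (n : ℝ) ^ (k + 1) := by
        simp only [div_pow, integral_div]
    _ ≤ touchard (k + 1) 1 * max (n * p : ℝ) ((n * p) ^ (k + 1)) / (n : ℝ) ^ (k + 1) := by
        gcongr
        exact (integral_pow_binomial_le_touchard n (k + 1) p).trans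
          (touchard_succ_le k (mul_nonneg hn₀.le p.2.1))
    _ = touchard (k + 1) 1 * max ((p : ℝ) ^ (k + 1)) (p / (n : ℝ) ^ k) := by
        rw [mul_div_assoc, hscale]

lemma ae_le_binomial (n : ℕ) (p : I) : ∀ᵐ x ∂Bin(n, p), x ≤ n :=
  ae_le_of_hasLaw_binomial HasLaw.id

lemma integral_binomial_symm {E : Type*} [NormedAddCommGroup E] [NormedSpace ℝ E]
    [CompleteSpace E] (n : ℕ) (p : I) (f : ℕ → E) :
    ∫ x, f x ∂Bin(n, σ p) = ∫ x, f (n - x) ∂Bin(n, p) := by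
  rw [integral_binomial, integral_binomial, ← Nat.range_succ_eq_Iic, ← Finset.sum_flip]
  refine Finset.sum_congr rfl fun i hi ↦ ?_
  have hin : i ≤ n := Finset.mem_range_succ_iff.mp hi
  rw [Nat.choose_symm hin, Nat.sub_sub_self hin, coe_symm_eq, sub_sub_cancel, mul_right_comm]

lemma integral_div_mul_one_sub_div_pow_binomial_symm {n : ℕ} (hn : n ≠ 0) (k : ℕ) (p : I) :
    ∫ x, ((x : ℝ) / n * (1 - x / n)) ^ k ∂Bin(n, σ p)
      = ∫ x, ((x : ℝ) / n * (1 - x / n)) ^ k ∂Bin(n, p) := by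
  rw [integral_binomial_symm]
  refine integral_congr_ae ?_
  filter_upwards [ae_le_binomial n p] with x hx
  have hsub : ((n - x : ℕ) : ℝ) / n = 1 - x / n := by
    rw [Nat.cast_sub hx, sub_div, div_self (mod_cast hn)]
  rw [hsub, sub_sub_cancel, mul_comm]

lemma integral_div_mul_one_sub_div_pow_binomial_le_integral_div_pow (n k : ℕ) (p : I) :
    ∫ x, ((x : ℝ) / n * (1 - x / n)) ^ k ∂Bin(n, p) ≤ ∫ x, ((x : ℝ) / n) ^ k ∂Bin(n, p) := by
  refine integral_mono_ae (integrable_binomial _) (integrable_binomial _) ?_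
  filter_upwards [ae_le_binomial n p] with x hx
  have hnonneg : 0 ≤ (x : ℝ) / n := by positivity
  have hle : (x : ℝ) / n ≤ 1 := div_le_one_of_le₀ (mod_cast hx) n.cast_nonneg
  exact pow_le_pow_left₀ (mul_nonneg hnonneg (sub_nonneg.mpr hle))
    (mul_le_of_le_one_right hnonneg (sub_le_self 1 hnonneg)) k

lemma integral_div_mul_one_sub_div_pow_binomial_le {n : ℕ} (hn : n ≠ 0) (k : ℕ) (p : I) :
    ∫ x, ((x : ℝ) / n * (1 - x / n)) ^ (k + 1) ∂Bin(n, p)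
      ≤ 2 ^ (k + 1) * touchard (k + 1) 1
        * max (((p : ℝ) * (1 - p)) ^ (k + 1)) (p * (1 - p) / (n : ℝ) ^ k) := by
  wlog hp : (p : ℝ) ≤ 1 / 2 generalizing p
  · have h := this (σ p) (by rw [coe_symm_eq]; linarith)
    rwa [integral_div_mul_one_sub_div_pow_binomial_symm hn, coe_symm_eq, sub_sub_cancel,
      mul_comm (1 - (p : ℝ))] at h
  have hp₀ : (0 : ℝ) ≤ p := p.2.1
  have hθ : (p : ℝ) ≤ 2 * (p * (1 - p)) := by nlinarith
  have hθ₀ : 0 ≤ (p : ℝ) * (1 - p) := mul_nonneg hp₀ (one_minus_nonneg p)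
  have hmax : max ((p : ℝ) ^ (k + 1)) (p / (n : ℝ) ^ k)
      ≤ 2 ^ (k + 1) * max (((p : ℝ) * (1 - p)) ^ (k + 1)) (p * (1 - p) / (n : ℝ) ^ k) := by
    rw [mul_max_of_nonneg _ _ (by positivity), ← mul_pow, ← mul_div_assoc]
    gcongr
    exact hθ.trans (mul_le_mul_of_nonneg_right (le_self_pow₀ one_le_two k.succ_ne_zero) hθ₀)
  calc ∫ x, ((x : ℝ) / n * (1 - x / n)) ^ (k + 1) ∂Bin(n, p)
      ≤ ∫ x, ((x : ℝ) / n) ^ (k + 1) ∂Bin(n, p) :=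
        integral_div_mul_one_sub_div_pow_binomial_le_integral_div_pow n (k + 1) p
    _ ≤ touchard (k + 1) 1 * max ((p : ℝ) ^ (k + 1)) (p / (n : ℝ) ^ k) :=
        integral_div_pow_binomial_le hn k p
    _ ≤ touchard (k + 1) 1 * (2 ^ (k + 1) *
          max (((p : ℝ) * (1 - p)) ^ (k + 1)) (p * (1 - p) / (n : ℝ) ^ k)) :=
        mul_le_mul_of_nonneg_left hmax (touchard_one_nonneg _)
    _ = _ := by ring

lemma IsBinomial.hasLaw {Ω : Type*} [MeasurableSpace Ω] {μ : Measure Ω} [IsFiniteMeasure μ]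
    {X : Ω → ℕ} {n : ℕ} {p : I} (h : IsBinomial μ X n p) (hX : Measurable X) :
    HasLaw X Bin(n, p) μ where
  aemeasurable := hX.aemeasurable
  map_eq := by
    refine Measure.ext_of_measureReal_singleton fun m ↦ ?_
    rw [map_measureReal_apply hX (measurableSet_singleton m), binomial_real_singleton]
    exact h m

lemma IsBinomial.integral_comp {Ω : Type*} [MeasurableSpace Ω] {μ : Measure Ω}
    [IsFiniteMeasure μ] {X : Ω → ℕ} {n : ℕ} {p : I} (h : IsBinomial μ X n p) (hX : Measurable X)
    {E : Type*} [NormedAddCommGroup E] [NormedSpace ℝ E] (f : ℕ → E) :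
    ∫ ω, f (X ω) ∂μ = ∫ x, f x ∂Bin(n, p) :=
  (h.hasLaw hX).integral_comp (integrable_binomial f).aestronglyMeasurable

end Binomial

/-- exact formula for `E[π̂⁴]`, the bound `E[π̂⁴] ≤ 28·max{π⁴, π/n³}`, and
a universal constant `C' > 0` with `E[(π̂(1−π̂))⁴] ≤ C'·max{θ⁴, θ/n³}`. -/
theorem stmt_18 {Ω : Type*} [MeasurableSpace Ω] (μ : Measure Ω) [IsProbabilityMeasure μ]
    (n : ℕ) (hn : 1 ≤ n) (p : ℝ) (hp : p ∈ Set.Ioo (0 : ℝ) 1)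
    (X : Ω → ℕ) (hmeas : Measurable X) (hbin : IsBinomial μ X n p) :
    (∫ ω, ((X ω : ℝ) / n) ^ 4 ∂μ)
      = p ^ 4 + 6 * p ^ 2 * (p * (1 - p)) / (n : ℝ)
        + 4 * p * (1 - 2 * p) * (p * (1 - p)) / (n : ℝ) ^ 2
        + 3 * (p * (1 - p)) ^ 2 / (n : ℝ) ^ 2
        + (1 - 6 * (p * (1 - p))) * (p * (1 - p)) / (n : ℝ) ^ 3 ∧
    (∫ ω, ((X ω : ℝ) / n) ^ 4 ∂μ) ≤ 28 * max (p ^ 4) (p / (n : ℝ) ^ 3) ∧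
    (∃ C' : ℝ, 0 < C' ∧
      ∀ (Ω' : Type) (mΩ' : MeasurableSpace Ω') (μ' : Measure Ω'),
        IsProbabilityMeasure μ' →
        ∀ (n' : ℕ), 1 ≤ n' → ∀ (p' : ℝ), p' ∈ Set.Ioo (0 : ℝ) 1 →
        ∀ (X' : Ω' → ℕ), Measurable X' → IsBinomial μ' X' n' p' →
          (∫ ω, (((X' ω : ℝ) / n') * (1 - (X' ω : ℝ) / n')) ^ 4 ∂μ')
            ≤ C' * max ((p' * (1 - p')) ^ 4) ((p' * (1 - p')) / (n' : ℝ) ^ 3)) := by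
  lift p to unitInterval using Set.Ioo_subset_Icc_self hp
  have hn₀ : n ≠ 0 := Nat.one_le_iff_ne_zero.mp hn
  have hmoment := hbin.integral_comp hmeas fun x ↦ ((x : ℝ) / n) ^ 4
  refine ⟨hmoment.trans (integral_div_pow_four_binomial hn₀ p), ?_,
    2 ^ 4 * touchard 4 1, by norm_num [touchard_four_one], ?_⟩
  · have hbound := integral_div_pow_binomial_le hn₀ 3 p
    rw [touchard_four_one] at hbound
    have hmax : 0 ≤ max ((p : ℝ) ^ 4) (p / (n : ℝ) ^ 3) := le_max_of_le_left (by positivity)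
    linarith
  · intro Ω' _ μ' _ n' hn' p' hp' X' hmeas' hbin'
    lift p' to unitInterval using Set.Ioo_subset_Icc_self hp'
    rw [hbin'.integral_comp hmeas' fun x ↦ ((x : ℝ) / n' * (1 - x / n')) ^ 4]
    exact integral_div_mul_one_sub_div_pow_binomial_le (Nat.one_le_iff_ne_zero.mp hn') 3 p'
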